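/- In the calculus λ_S, the diverging terms Ω and Ω Ω are contextually equivalent in the relaxed semantics: Ω ≈ Ω Ω. -/

import Mathlib

namespace LambdaS

/-- Terms of the calculus λ_S: variables, λ-abstractions, applications,
the shift operator `S k.t`, and the reset delimiter `⟨t⟩`. -/
inductive Tm : Type
  | var : ℕ → Tm
  | lam : ℕ → Tm → Tm
  | app : Tm → Tm → Tm
  | shift : ℕ → Tm → Tm
  | reset : Tm → Tm
  deriving DecidableEq

/-- A variable fresh for a finite set of variables. -/
def fresh (s : Finset ℕ) : ℕ := if h : s.Nonempty then s.max' h + 1 else 0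

namespace Tm

/-- Free variables. -/
def fv : Tm → Finset ℕ
  | var x => {x}
  | lam x t => fv t \ {x}
  | app t u => fv t ∪ fv u
  | shift k t => fv t \ {k}
  | reset t => fv t

def size : Tm → ℕ
  | var _ => 1
  | lam _ t => size t + 1
  | app t u => size t + size u + 1
  | shift _ t => size t + 1
  | reset t => size t + 1

/-- Renaming of free occurrences of a variable (used for α-renaming with a
fresh target variable). -/
def rename : Tm → ℕ → ℕ → Tm
  | var w, y, z => if w = y then var z else var w
  | lam w t, y, z => if w = y then lam w t else lam w (rename t y z)
  | app t u, y, z => app (rename t y z) (rename u y z)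
  | shift w t, y, z => if w = y then shift w t else shift w (rename t y z)
  | reset t, y, z => reset (rename t y z)

theorem size_rename (t : Tm) (y z : ℕ) : size (rename t y z) = size t := by
  induction t generalizing y z with
  | var w => simp only [rename]; split <;> rfl
  | lam w t ih => simp only [rename]; split <;> simp [size, ih]
  | app t u iht ihu => simp [rename, size, iht, ihu]
  | shift w t ih => simp only [rename]; split <;> simp [size, ih]
  | reset t ih => simp [rename, size, ih]

/-- Capture-avoiding substitution `t{v/x}` of `v` for the free occurrences of
`x` in `t`; bound variables are α-renamed when needed. -/
def subst : Tm → ℕ → Tm → Tm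
  | var w, x, v => if w = x then v else var w
  | lam y t, x, v =>
      if y = x then lam y t
      else if y ∈ fv v then
        lam (fresh (fv v ∪ fv t ∪ {x}))
          (subst (rename t y (fresh (fv v ∪ fv t ∪ {x}))) x v)
      else lam y (subst t x v)
  | app t u, x, v => app (subst t x v) (subst u x v)
  | shift y t, x, v =>
      if y = x then shift y t
      else if y ∈ fv v then
        shift (fresh (fv v ∪ fv t ∪ {x}))
          (subst (rename t y (fresh (fv v ∪ fv t ∪ {x}))) x v)
      else shift y (subst t x v)
  | reset t, x, v => reset (subst t x v)
termination_by t _ _ => size t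
decreasing_by all_goals simp [size_rename, size] <;> omega

end Tm

/-- Values: variables and λ-abstractions. -/
inductive IsValue : Tm → Prop
  | var (x : ℕ) : IsValue (Tm.var x)
  | lam (x : ℕ) (t : Tm) : IsValue (Tm.lam x t)

/-- A term is closed if it has no free variables. -/
def Closed (t : Tm) : Prop := t.fv = ∅

/-- Pure evaluation contexts E ::= □ | v E | E t. -/
inductive ECtx : Type
  | hole : ECtx
  | appR : (v : Tm) → IsValue v → ECtx → ECtx
  | appL : ECtx → Tm → ECtx

def ECtx.plug : ECtx → Tm → Tm
  | .hole, t => t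
  | .appR v _ E, t => Tm.app v (E.plug t)
  | .appL E u, t => Tm.app (E.plug t) u

def ECtx.fv : ECtx → Finset ℕ
  | .hole => ∅
  | .appR v _ E => v.fv ∪ E.fv
  | .appL E u => E.fv ∪ u.fv

/-- Composition of pure contexts: `(E.comp E').plug t = E.plug (E'.plug t)`. -/
def ECtx.comp : ECtx → ECtx → ECtx
  | .hole, E' => E'
  | .appR v hv E, E' => .appR v hv (E.comp E')
  | .appL E u, E' => .appL (E.comp E') u

/-- Evaluation contexts F ::= □ | v F | F t | ⟨F⟩. -/
inductive FCtx : Type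
  | hole : FCtx
  | appR : (v : Tm) → IsValue v → FCtx → FCtx
  | appL : FCtx → Tm → FCtx
  | reset : FCtx → FCtx

def FCtx.plug : FCtx → Tm → Tm
  | .hole, t => t
  | .appR v _ F, t => Tm.app v (F.plug t)
  | .appL F u, t => Tm.app (F.plug t) u
  | .reset F, t => Tm.reset (F.plug t)

def FCtx.fv : FCtx → Finset ℕ
  | .hole => ∅
  | .appR v _ F => v.fv ∪ F.fv
  | .appL F u => F.fv ∪ u.fv
  | .reset F => F.fv

/-- The function `λx.⟨E[x]⟩` representing the captured delimited context `E`,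
where `x` is chosen fresh (in particular `x ∉ fv E`). -/
def contFun (E : ECtx) : Tm :=
  Tm.lam (fresh E.fv) (Tm.reset (E.plug (Tm.var (fresh E.fv))))

/-- Call-by-value reduction →_v of λ_S. -/
inductive Red : Tm → Tm → Prop
  | beta (F : FCtx) (x : ℕ) (t v : Tm) :
      IsValue v →
      Red (F.plug (Tm.app (Tm.lam x t) v)) (F.plug (t.subst x v))
  | capture (F : FCtx) (E : ECtx) (k : ℕ) (t : Tm) :
      Red (F.plug (Tm.reset (E.plug (Tm.shift k t))))
          (F.plug (Tm.reset (t.subst k (contFun E))))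
  | resetVal (F : FCtx) (v : Tm) :
      IsValue v →
      Red (F.plug (Tm.reset v)) (F.plug v)

/-- A stuck term: not a value and unable to reduce. -/
def Stuck (t : Tm) : Prop := ¬ IsValue t ∧ ∀ t', ¬ Red t t'

/-- Normal forms: values and stuck terms. -/
def NormalForm (t : Tm) : Prop := IsValue t ∨ Stuck t

/-- A control-stuck term has the form E[S k.t]. -/
def ControlStuck (t : Tm) : Prop :=
  ∃ (E : ECtx) (k : ℕ) (s : Tm), t = E.plug (Tm.shift k s)

/-- Evaluation: `t ⇓ t'` iff `t →_v* t'` and `t'` is a normal form. -/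
def Evals (t t' : Tm) : Prop := Relation.ReflTransGen Red t t' ∧ NormalForm t'

/-- `t` evaluates to some value. -/
def EvalsToValue (t : Tm) : Prop := ∃ v, Relation.ReflTransGen Red t v ∧ IsValue v

/-- `t` evaluates to some control-stuck term. -/
def EvalsToStuck (t : Tm) : Prop :=
  ∃ s, Relation.ReflTransGen Red t s ∧ ControlStuck s

/-- General contexts C ::= □ | λx.C | t C | C t | S k.C | ⟨C⟩. -/
inductive Ctx : Type
  | hole : Ctx
  | lam : ℕ → Ctx → Ctx
  | appL : Ctx → Tm → Ctx
  | appR : Tm → Ctx → Ctx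
  | shift : ℕ → Ctx → Ctx
  | reset : Ctx → Ctx

def Ctx.plug : Ctx → Tm → Tm
  | .hole, t => t
  | .lam x C, t => Tm.lam x (C.plug t)
  | .appL C u, t => Tm.app (C.plug t) u
  | .appR u C, t => Tm.app u (C.plug t)
  | .shift k C, t => Tm.shift k (C.plug t)
  | .reset C, t => Tm.reset (C.plug t)

def Ctx.fv : Ctx → Finset ℕ
  | .hole => ∅
  | .lam x C => C.fv \ {x}
  | .appL C u => C.fv ∪ u.fv
  | .appR u C => u.fv ∪ C.fv
  | .shift k C => C.fv \ {k}
  | .reset C => C.fv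

/-- Contextual equivalence ≈ for the relaxed semantics (on closed terms):
tests evaluation to values and evaluation to control-stuck terms in every
closed context. -/
def CtxEquiv (t0 t1 : Tm) : Prop :=
  ∀ C : Ctx, C.fv = ∅ →
    (EvalsToValue (C.plug t0) ↔ EvalsToValue (C.plug t1)) ∧
    (EvalsToStuck (C.plug t0) ↔ EvalsToStuck (C.plug t1))

/-- Contextual equivalence ≈_p for the original semantics: tests evaluation to
values of ⟨C[·]⟩ in every closed context C. -/
def CtxEquivP (t0 t1 : Tm) : Prop :=
  ∀ C : Ctx, C.fv = ∅ →
    (EvalsToValue (Tm.reset (C.plug t0)) ↔ EvalsToValue (Tm.reset (C.plug t1)))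

/-- Contextual equivalence ≈_E testing only with closed evaluation contexts. -/
def ECtxEquiv (t0 t1 : Tm) : Prop :=
  ∀ F : FCtx, F.fv = ∅ →
    (EvalsToValue (F.plug t0) ↔ EvalsToValue (F.plug t1)) ∧
    (EvalsToStuck (F.plug t0) ↔ EvalsToStuck (F.plug t1))

/-- Applicative simulation. -/
def IsAppSim (R : Tm → Tm → Prop) : Prop :=
  ∀ t0 t1, R t0 t1 →
    (∀ t0', Red t0 t0' →
      ∃ t1', Relation.ReflTransGen Red t1 t1' ∧ R t0' t1') ∧
    (∀ x t0', t0 = Tm.lam x t0' →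
      ∃ t1', Relation.ReflTransGen Red t1 (Tm.lam x t1') ∧
        ∀ v, IsValue v → Closed v → R (t0'.subst x v) (t1'.subst x v)) ∧
    (∀ (E0 : ECtx) (k : ℕ) (t0' : Tm), t0 = E0.plug (Tm.shift k t0') →
      ∃ (E1 : ECtx) (t1' : Tm),
        Relation.ReflTransGen Red t1 (E1.plug (Tm.shift k t1')) ∧
        ∀ E : ECtx, E.fv = ∅ →
          R (Tm.reset (t0'.subst k (contFun (E.comp E0))))
            (Tm.reset (t1'.subst k (contFun (E.comp E1)))))

/-- Applicative bisimulation. -/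
def IsAppBisim (R : Tm → Tm → Prop) : Prop :=
  IsAppSim R ∧ IsAppSim (fun a b => R b a)

/-- Applicative bisimilarity ≈_app: the largest applicative bisimulation. -/
def AppBisim (t0 t1 : Tm) : Prop := ∃ R, IsAppBisim R ∧ R t0 t1

/-- Simultaneous substitution (used only with closing substitutions mapping
variables to closed values, so no capture can occur). -/
def Tm.msubst : Tm → (ℕ → Tm) → Tm
  | .var x, σ => σ x
  | .lam x t, σ => Tm.lam x (t.msubst (Function.update σ x (Tm.var x)))
  | .app t u, σ => Tm.app (t.msubst σ) (u.msubst σ)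
  | .shift k t, σ => Tm.shift k (t.msubst (Function.update σ k (Tm.var k)))
  | .reset t, σ => Tm.reset (t.msubst σ)

/-- Open extension of a relation on closed terms: relate `t0σ` and `t1σ` for
every substitution σ mapping variables to closed values. -/
def OpenExt (R : Tm → Tm → Prop) (t0 t1 : Tm) : Prop :=
  ∀ σ : ℕ → Tm, (∀ x, IsValue (σ x) ∧ Closed (σ x)) →
    R (t0.msubst σ) (t1.msubst σ)

/-- ω := λx.x x. -/
def omegaTm : Tm := Tm.lam 0 (Tm.app (Tm.var 0) (Tm.var 0))

/-- Ω := ω ω, a diverging term. -/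
def OmegaTm : Tm := Tm.app omegaTm omegaTm


/-!
Fix a set of closed diverging terms that is stable under substitution and reduction, and call two
terms equal modulo this set when one arises from the other by exchanging members of the set. This
relation is a weak simulation that respects values and control-stuck terms: a step made inside an
exchanged subterm stays inside the set, so it is matched by doing nothing, and every other step is
matched by the same step, because an exchanged subterm is never a value nor of the form `E[S k.t]`,
so that exchanging it leaves the shape of the contracted redex intact. As the relation is symmetric
and compatible with all contexts, any two members of the set are contextually equivalent. The set
used here consists of the terms built from α-variants of `Ω` by application.
-/

theorem fresh_notMem (s : Finset ℕ) : fresh s ∉ s := by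
  intro hmem
  have hle : fresh s ≤ s.max' ⟨_, hmem⟩ := s.le_max' _ hmem
  have hfresh : fresh s = s.max' ⟨_, hmem⟩ + 1 := dif_pos _
  lia

theorem Tm.rename_of_notMem_fv {t : Tm} {y : ℕ} (hy : y ∉ t.fv) (z : ℕ) : t.rename y z = t := by
  induction t <;> grind [Tm.rename, Tm.fv]

/-! ### Reduction and control-stuck terms -/

/-- Composition of evaluation contexts: `F.comp G` is `F[G]`. -/
def FCtx.comp : FCtx → FCtx → FCtx
  | .hole, G => G
  | .appR v hv F, G => .appR v hv (F.comp G)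
  | .appL F u, G => .appL (F.comp G) u
  | .reset F, G => .reset (F.comp G)

theorem FCtx.plug_comp (F G : FCtx) (t : Tm) : (F.comp G).plug t = F.plug (G.plug t) := by
  induction F <;> simp_all only [FCtx.comp, FCtx.plug]

theorem Red.plug {t t' : Tm} (h : Red t t') (F : FCtx) : Red (F.plug t) (F.plug t') := by
  cases h with
  | beta G x t v hv => simpa only [FCtx.plug_comp] using Red.beta (F.comp G) x t v hv
  | capture G E k t => simpa only [FCtx.plug_comp] using Red.capture (F.comp G) E k t
  | resetVal G v hv => simpa only [FCtx.plug_comp] using Red.resetVal (F.comp G) v hv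

theorem reflTransGen_red_plug {t t' : Tm} (h : Relation.ReflTransGen Red t t') (F : FCtx) :
    Relation.ReflTransGen Red (F.plug t) (F.plug t') :=
  h.lift F.plug fun _ _ hred => hred.plug F

theorem IsValue.not_red {v s : Tm} (hv : IsValue v) : ¬ Red v s := by
  intro h
  cases h with
  | beta F => cases F <;> cases hv
  | capture F => cases F <;> cases hv
  | resetVal F => cases F <;> cases hv

theorem Red.app_cases {t u s : Tm} (h : Red (.app t u) s) :
    (∃ x b, t = .lam x b ∧ IsValue u ∧ s = b.subst x u) ∨
    (∃ t', Red t t' ∧ s = .app t' u) ∨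
    (IsValue t ∧ ∃ u', Red u u' ∧ s = .app t u') := by
  generalize htu : Tm.app t u = r at h
  cases h with
  | beta F x b v hv =>
    cases F <;> cases htu
    case hole.refl => exact .inl ⟨x, b, rfl, hv, rfl⟩
    case appR.refl F hw => exact .inr (.inr ⟨hw, _, .beta F x b v hv, rfl⟩)
    case appL.refl F => exact .inr (.inl ⟨_, .beta F x b v hv, rfl⟩)
  | capture F E k b =>
    cases F <;> cases htu
    case appR.refl F hw => exact .inr (.inr ⟨hw, _, .capture F E k b, rfl⟩)
    case appL.refl F => exact .inr (.inl ⟨_, .capture F E k b, rfl⟩)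
  | resetVal F v hv =>
    cases F <;> cases htu
    case appR.refl F hw => exact .inr (.inr ⟨hw, _, .resetVal F v hv, rfl⟩)
    case appL.refl F => exact .inr (.inl ⟨_, .resetVal F v hv, rfl⟩)

theorem IsValue.not_controlStuck {v : Tm} (hv : IsValue v) : ¬ ControlStuck v := by
  rintro ⟨E, k, s, rfl⟩
  cases E <;> cases hv

theorem controlStuck_app_iff {t u : Tm} :
    ControlStuck (.app t u) ↔ ControlStuck t ∨ IsValue t ∧ ControlStuck u := by
  constructor
  · rintro ⟨E, k, s, h⟩
    cases E <;> cases h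
    case appR.refl E ht => exact .inr ⟨ht, E, k, s, rfl⟩
    case appL.refl E => exact .inl ⟨E, k, s, rfl⟩
  · rintro (⟨E, k, s, rfl⟩ | ⟨ht, E, k, s, rfl⟩)
    · exact ⟨.appL E u, k, s, rfl⟩
    · exact ⟨.appR t ht E, k, s, rfl⟩

/-! ### Equality modulo a set of diverging terms -/

/-- Equality modulo `D`: the compatible closure of the relation that holds between any two terms
satisfying `D`. -/
inductive EqMod (D : Tm → Prop) : Tm → Tm → Prop
  | exchange {d e : Tm} : D d → D e → EqMod D d e
  | var (x : ℕ) : EqMod D (.var x) (.var x)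
  | lam (x : ℕ) {t u : Tm} : EqMod D t u → EqMod D (.lam x t) (.lam x u)
  | app {t u t' u' : Tm} : EqMod D t t' → EqMod D u u' → EqMod D (.app t u) (.app t' u')
  | shift (k : ℕ) {t u : Tm} : EqMod D t u → EqMod D (.shift k t) (.shift k u)
  | reset {t u : Tm} : EqMod D t u → EqMod D (.reset t) (.reset u)

/-- The extension of `EqMod D` to pure evaluation contexts, relating the holes to each other. -/
inductive ECtx.EqMod (D : Tm → Prop) : ECtx → ECtx → Prop
  | hole : ECtx.EqMod D .hole .hole
  | appR {v v' : Tm} (hv : IsValue v) (hv' : IsValue v') {E E' : ECtx} :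
      LambdaS.EqMod D v v' → ECtx.EqMod D E E' → ECtx.EqMod D (.appR v hv E) (.appR v' hv' E')
  | appL {E E' : ECtx} {t t' : Tm} :
      ECtx.EqMod D E E' → LambdaS.EqMod D t t' → ECtx.EqMod D (.appL E t) (.appL E' t')

/-- A set `D` of closed terms, given as a predicate, that is stable under substitution and
reduction and contains neither values nor control-stuck terms. As a closed term that is neither a
value nor control-stuck can always reduce, all members of `D` diverge. Stability under substitution
has to be required because `Tm.subst` may rename bound variables even in a closed term. -/
structure IsDivergenceClass (D : Tm → Prop) : Prop where
  closed : ∀ ⦃d⦄, D d → Closed d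
  subst : ∀ ⦃d⦄, D d → ∀ (x : ℕ) (v : Tm), D (d.subst x v)
  red : ∀ ⦃d d'⦄, D d → Red d d' → D d'
  not_isValue : ∀ ⦃d⦄, D d → ¬ IsValue d
  not_controlStuck : ∀ ⦃d⦄, D d → ¬ ControlStuck d

section EqMod

variable {D : Tm → Prop} {t u v w : Tm}

@[refl]
theorem EqMod.refl (t : Tm) : EqMod D t t := by
  induction t with
  | var x => exact .var x
  | lam x _ ih => exact .lam x ih
  | app _ _ iht ihu => exact .app iht ihu
  | shift k _ ih => exact .shift k ih
  | reset _ ih => exact .reset ih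

theorem EqMod.plug (C : Ctx) (h : EqMod D t u) : EqMod D (C.plug t) (C.plug u) := by
  induction C with
  | hole => exact h
  | lam x _ ih => exact .lam x ih
  | appL _ s ih => exact .app ih (.refl s)
  | appR s _ ih => exact .app (.refl s) ih
  | shift k _ ih => exact .shift k ih
  | reset _ ih => exact .reset ih

theorem ECtx.EqMod.plug {E E' : ECtx} (hE : E.EqMod D E') (h : LambdaS.EqMod D t u) :
    LambdaS.EqMod D (E.plug t) (E'.plug u) := by
  induction hE with
  | hole => exact h
  | appR _ _ hv _ ih => exact .app hv ih
  | appL _ ht ih => exact .app ih ht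

theorem EqMod.fv_eq (hD : ∀ ⦃d⦄, D d → Closed d) (h : EqMod D t u) : t.fv = u.fv := by
  induction h with
  | exchange hd he => exact (hD hd).trans (hD he).symm
  | var => rfl
  | _ => simp only [Tm.fv, *]

theorem ECtx.EqMod.fv_eq (hD : ∀ ⦃d⦄, D d → Closed d) {E E' : ECtx} (hE : E.EqMod D E') :
    E.fv = E'.fv := by
  induction hE with
  | hole => rfl
  | appR _ _ hv _ ih => simp only [ECtx.fv, hv.fv_eq hD, ih]
  | appL _ ht ih => simp only [ECtx.fv, ht.fv_eq hD, ih]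

theorem ECtx.EqMod.contFun (hD : ∀ ⦃d⦄, D d → Closed d) {E E' : ECtx} (hE : E.EqMod D E') :
    LambdaS.EqMod D (contFun E) (contFun E') := by
  unfold LambdaS.contFun
  rw [← hE.fv_eq hD]
  exact .lam _ (.reset (hE.plug (.refl _)))

theorem EqMod.rename (hD : ∀ ⦃d⦄, D d → Closed d) (h : EqMod D t u) (y z : ℕ) :
    EqMod D (t.rename y z) (u.rename y z) := by
  have rename_eq {d : Tm} (hd : D d) : d.rename y z = d :=
    Tm.rename_of_notMem_fv (by simp [show d.fv = ∅ from hD hd]) z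
  induction h with
  | exchange hd he => rw [rename_eq hd, rename_eq he]; exact .exchange hd he
  | var => rfl
  | lam x h ih =>
    simp only [Tm.rename]
    split_ifs
    · exact .lam x h
    · exact .lam x ih
  | app _ _ iht ihu => exact .app iht ihu
  | shift k h ih =>
    simp only [Tm.rename]
    split_ifs
    · exact .shift k h
    · exact .shift k ih
  | reset _ ih => exact .reset ih

theorem EqMod.isValue (hD : IsDivergenceClass D) (h : EqMod D t u) (ht : IsValue t) :
    IsValue u := by
  cases h with
  | exchange hd _ => exact absurd ht (hD.not_isValue hd)
  | var x => exact .var x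
  | lam x _ => exact .lam x _
  | _ => cases ht

theorem EqMod.subst {t u : Tm} (hD : IsDivergenceClass D) (h : EqMod D t u) (hvw : EqMod D v w)
    (x : ℕ) : EqMod D (t.subst x v) (u.subst x w) := by
  match h with
  | .exchange hd he => exact .exchange (hD.subst hd x v) (hD.subst he x w)
  | .var y =>
    simp only [Tm.subst]
    split
    · exact hvw
    · exact .refl _
  | .lam y h =>
    simp only [Tm.subst, ← h.fv_eq hD.closed, ← hvw.fv_eq hD.closed]
    split_ifs
    · exact .lam y h
    · exact .lam _ (EqMod.subst hD (h.rename hD.closed y _) hvw x)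
    · exact .lam y (EqMod.subst hD h hvw x)
  | .app ht hu =>
    simp only [Tm.subst]
    exact .app (EqMod.subst hD ht hvw x) (EqMod.subst hD hu hvw x)
  | .shift k h =>
    simp only [Tm.subst, ← h.fv_eq hD.closed, ← hvw.fv_eq hD.closed]
    split_ifs
    · exact .shift k h
    · exact .shift _ (EqMod.subst hD (h.rename hD.closed k _) hvw x)
    · exact .shift k (EqMod.subst hD h hvw x)
  | .reset h =>
    simp only [Tm.subst]
    exact .reset (EqMod.subst hD h hvw x)
termination_by t.size
decreasing_by all_goals simp only [Tm.size, Tm.size_rename]; lia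

theorem EqMod.exists_eq_plug_shift (hD : IsDivergenceClass D) {E : ECtx} {k : ℕ}
    (h : EqMod D (E.plug (.shift k t)) u) :
    ∃ E' t', u = E'.plug (.shift k t') ∧ E.EqMod D E' ∧ EqMod D t t' := by
  induction E generalizing u with
  | hole =>
    cases h with
    | exchange hd _ => exact absurd ⟨.hole, k, t, rfl⟩ (hD.not_controlStuck hd)
    | shift _ h => exact ⟨.hole, _, rfl, .hole, h⟩
  | appR v hv E ih =>
    cases h with
    | exchange hd _ => exact absurd ⟨.appR v hv E, k, t, rfl⟩ (hD.not_controlStuck hd)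
    | app hvw h =>
      obtain ⟨E', t', rfl, hE, ht⟩ := ih h
      exact ⟨.appR _ (hvw.isValue hD hv) E', t', rfl, .appR _ _ hvw hE, ht⟩
  | appL E s ih =>
    cases h with
    | exchange hd _ => exact absurd ⟨.appL E s, k, t, rfl⟩ (hD.not_controlStuck hd)
    | app h hs =>
      obtain ⟨E', t', rfl, hE, ht⟩ := ih h
      exact ⟨.appL E' _, t', rfl, .appL hE hs, ht⟩

/-! ### Equality modulo a set of diverging terms is a weak simulation -/

theorem EqMod.exists_red_of_beta (hD : IsDivergenceClass D) {x : ℕ} {b : Tm} (hv : IsValue v)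
    (h : EqMod D (.app (.lam x b) v) u) :
    ∃ u', Relation.ReflTransGen Red u u' ∧ EqMod D (b.subst x v) u' := by
  cases h with
  | exchange hd he => exact ⟨u, .refl, .exchange (hD.red hd (.beta .hole x b v hv)) he⟩
  | app hlam hvw =>
    cases hlam with
    | exchange hd _ => exact absurd (.lam x b) (hD.not_isValue hd)
    | lam _ hb =>
      exact ⟨_, .single (.beta .hole x _ _ (hvw.isValue hD hv)), hb.subst hD hvw x⟩

theorem EqMod.exists_red_of_capture (hD : IsDivergenceClass D) {E : ECtx} {k : ℕ}
    (h : EqMod D (.reset (E.plug (.shift k t))) u) :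
    ∃ u', Relation.ReflTransGen Red u u' ∧ EqMod D (.reset (t.subst k (contFun E))) u' := by
  cases h with
  | exchange hd he => exact ⟨u, .refl, .exchange (hD.red hd (.capture .hole E k t)) he⟩
  | reset h =>
    obtain ⟨E', t', rfl, hE, ht⟩ := h.exists_eq_plug_shift hD
    exact ⟨_, .single (.capture .hole E' k t'), .reset (ht.subst hD (hE.contFun hD.closed) k)⟩

theorem EqMod.exists_red_of_resetVal (hD : IsDivergenceClass D) (hv : IsValue v)
    (h : EqMod D (.reset v) u) :
    ∃ u', Relation.ReflTransGen Red u u' ∧ EqMod D v u' := by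
  cases h with
  | exchange hd he => exact ⟨u, .refl, .exchange (hD.red hd (.resetVal .hole v hv)) he⟩
  | reset h => exact ⟨_, .single (.resetVal .hole _ (h.isValue hD hv)), h⟩

theorem EqMod.exists_reds_of_plug (hD : IsDivergenceClass D) {r r' : Tm} (hred : Red r r')
    (hr : ∀ {u}, EqMod D r u → ∃ u', Relation.ReflTransGen Red u u' ∧ EqMod D r' u')
    (F : FCtx) (h : EqMod D (F.plug r) u) :
    ∃ u', Relation.ReflTransGen Red u u' ∧ EqMod D (F.plug r') u' := by
  induction F generalizing u with
  | hole => exact hr h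
  | appR v hv F ih =>
    cases h with
    | exchange hd he => exact ⟨u, .refl, .exchange (hD.red hd (hred.plug (.appR v hv F))) he⟩
    | app hvw h =>
      obtain ⟨u', hu, hF⟩ := ih h
      exact ⟨_, reflTransGen_red_plug hu (.appR _ (hvw.isValue hD hv) .hole), .app hvw hF⟩
  | appL F s ih =>
    cases h with
    | exchange hd he => exact ⟨u, .refl, .exchange (hD.red hd (hred.plug (.appL F s))) he⟩
    | app h hs =>
      obtain ⟨u', hu, hF⟩ := ih h
      exact ⟨_, reflTransGen_red_plug hu (.appL .hole _), .app hF hs⟩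
  | reset F ih =>
    cases h with
    | exchange hd he => exact ⟨u, .refl, .exchange (hD.red hd (hred.plug (.reset F))) he⟩
    | reset h =>
      obtain ⟨u', hu, hF⟩ := ih h
      exact ⟨_, reflTransGen_red_plug hu (.reset .hole), .reset hF⟩

theorem EqMod.exists_reds_of_red (hD : IsDivergenceClass D) {t' : Tm} (hred : Red t t')
    (h : EqMod D t u) : ∃ u', Relation.ReflTransGen Red u u' ∧ EqMod D t' u' := by
  cases hred with
  | beta F x b v hv =>
    exact h.exists_reds_of_plug hD (.beta .hole x b v hv) (exists_red_of_beta hD hv) F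
  | capture F E k s =>
    exact h.exists_reds_of_plug hD (.capture .hole E k s) (exists_red_of_capture hD) F
  | resetVal F v hv =>
    exact h.exists_reds_of_plug hD (.resetVal .hole v hv) (exists_red_of_resetVal hD hv) F

theorem EqMod.exists_reds_of_reds (hD : IsDivergenceClass D) {t' : Tm}
    (hreds : Relation.ReflTransGen Red t t') (h : EqMod D t u) :
    ∃ u', Relation.ReflTransGen Red u u' ∧ EqMod D t' u' := by
  induction hreds with
  | refl => exact ⟨u, .refl, h⟩
  | tail _ hred ih =>
    obtain ⟨u₁, hu₁, h₁⟩ := ih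
    obtain ⟨u₂, hu₂, h₂⟩ := h₁.exists_reds_of_red hD hred
    exact ⟨u₂, hu₁.trans hu₂, h₂⟩

theorem EqMod.evalsToValue (hD : IsDivergenceClass D) (h : EqMod D t u) (ht : EvalsToValue t) :
    EvalsToValue u := by
  obtain ⟨v, hreds, hv⟩ := ht
  obtain ⟨w, hu, hvw⟩ := h.exists_reds_of_reds hD hreds
  exact ⟨w, hu, hvw.isValue hD hv⟩

theorem EqMod.evalsToStuck (hD : IsDivergenceClass D) (h : EqMod D t u) (ht : EvalsToStuck t) :
    EvalsToStuck u := by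
  obtain ⟨_, hreds, E, k, s, rfl⟩ := ht
  obtain ⟨_, hu, hstuck⟩ := h.exists_reds_of_reds hD hreds
  obtain ⟨E', s', rfl, -, -⟩ := hstuck.exists_eq_plug_shift hD
  exact ⟨_, hu, E', k, s', rfl⟩

end EqMod

section IsDivergenceClass

variable {D : Tm → Prop} {d e : Tm}

theorem IsDivergenceClass.evalsToValue_plug_iff (hD : IsDivergenceClass D) (hd : D d) (he : D e)
    (C : Ctx) : EvalsToValue (C.plug d) ↔ EvalsToValue (C.plug e) :=
  ⟨((EqMod.exchange hd he).plug C).evalsToValue hD, ((EqMod.exchange he hd).plug C).evalsToValue hD⟩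

theorem IsDivergenceClass.evalsToStuck_plug_iff (hD : IsDivergenceClass D) (hd : D d) (he : D e)
    (C : Ctx) : EvalsToStuck (C.plug d) ↔ EvalsToStuck (C.plug e) :=
  ⟨((EqMod.exchange hd he).plug C).evalsToStuck hD, ((EqMod.exchange he hd).plug C).evalsToStuck hD⟩

end IsDivergenceClass

/-! ### Applicative combinations of `Ω` -/

/-- The α-variant `λx.x x` of `ω`. -/
def omegaVariant (x : ℕ) : Tm := .lam x (.app (.var x) (.var x))

/-- The terms built from α-variants of `Ω` by application, such as `Ω`, `Ω Ω` and `Ω (Ω Ω)`. -/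
inductive IsOmegaTree : Tm → Prop
  | leaf (x y : ℕ) : IsOmegaTree (.app (omegaVariant x) (omegaVariant y))
  | node {d e : Tm} : IsOmegaTree d → IsOmegaTree e → IsOmegaTree (.app d e)

theorem fv_omegaVariant (x : ℕ) : (omegaVariant x).fv = ∅ := by
  simp [omegaVariant, Tm.fv]

theorem isValue_omegaVariant (x : ℕ) : IsValue (omegaVariant x) :=
  .lam x _

theorem exists_subst_omegaVariant_eq (x y : ℕ) (v : Tm) :
    ∃ z, (omegaVariant x).subst y v = omegaVariant z := by
  have fresh_ne (s : Finset ℕ) : fresh (s ∪ {y}) ≠ y := by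
    have := fresh_notMem (s ∪ {y})
    grind
  unfold omegaVariant
  rw [Tm.subst]
  split_ifs with hxy
  · exact ⟨x, rfl⟩
  · exact ⟨_, by simp only [Tm.rename, if_true, Tm.subst, if_neg (fresh_ne _)]; rfl⟩
  · exact ⟨x, by simp only [Tm.subst, if_neg hxy]⟩

theorem eq_of_red_app_omegaVariant {x y : ℕ} {s : Tm}
    (h : Red (.app (omegaVariant x) (omegaVariant y)) s) :
    s = .app (omegaVariant y) (omegaVariant y) := by
  obtain ⟨z, b, hlam, -, rfl⟩ | ⟨_, hred, -⟩ | ⟨-, _, hred, -⟩ := h.app_cases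
  · cases hlam
    simp only [Tm.subst, if_true]
  · exact absurd hred (isValue_omegaVariant x).not_red
  · exact absurd hred (isValue_omegaVariant y).not_red

section IsOmegaTree

variable {d : Tm}

theorem IsOmegaTree.closed (hd : IsOmegaTree d) : Closed d := by
  unfold Closed
  induction hd with
  | leaf x y => simp only [Tm.fv, fv_omegaVariant, Finset.union_empty]
  | node _ _ ihd ihe => simp only [Tm.fv, ihd, ihe, Finset.union_empty]

theorem IsOmegaTree.subst (hd : IsOmegaTree d) (x : ℕ) (v : Tm) : IsOmegaTree (d.subst x v) := by
  induction hd with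
  | leaf y z =>
    obtain ⟨y', hy⟩ := exists_subst_omegaVariant_eq y x v
    obtain ⟨z', hz⟩ := exists_subst_omegaVariant_eq z x v
    rw [Tm.subst, hy, hz]
    exact .leaf y' z'
  | node _ _ ihd ihe =>
    rw [Tm.subst]
    exact .node ihd ihe

theorem IsOmegaTree.not_isValue (hd : IsOmegaTree d) : ¬ IsValue d := by
  cases hd <;> rintro ⟨⟩

theorem IsOmegaTree.red {d' : Tm} (hd : IsOmegaTree d) (h : Red d d') : IsOmegaTree d' := by
  induction hd generalizing d' with
  | leaf x y => exact eq_of_red_app_omegaVariant h ▸ .leaf y y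
  | node hd he ihd _ =>
    obtain ⟨x, b, rfl, -⟩ | ⟨_, hred, rfl⟩ | ⟨hv, -⟩ := h.app_cases
    · exact absurd (.lam x b) hd.not_isValue
    · exact .node (ihd hred) he
    · exact absurd hv hd.not_isValue

theorem IsOmegaTree.not_controlStuck (hd : IsOmegaTree d) : ¬ ControlStuck d := by
  induction hd with
  | leaf x y =>
    simp only [controlStuck_app_iff, (isValue_omegaVariant _).not_controlStuck, and_false,
      or_self, not_false_eq_true]
  | node _ _ ihd ihe =>
    simp only [controlStuck_app_iff, ihd, ihe, and_false, or_self, not_false_eq_true]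

end IsOmegaTree

theorem isDivergenceClass_isOmegaTree : IsDivergenceClass IsOmegaTree where
  closed _ hd := hd.closed
  subst _ hd := hd.subst
  red _ _ hd := hd.red
  not_isValue _ hd := hd.not_isValue
  not_controlStuck _ hd := hd.not_controlStuck

theorem Omega_ctxEquiv_OmegaOmega_general (C : Ctx) :
    (EvalsToValue (C.plug OmegaTm) ↔ EvalsToValue (C.plug (.app OmegaTm OmegaTm))) ∧
    (EvalsToStuck (C.plug OmegaTm) ↔ EvalsToStuck (C.plug (.app OmegaTm OmegaTm))) :=
  have hΩ : IsOmegaTree OmegaTm := .leaf 0 0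
  have hΩΩ : IsOmegaTree (.app OmegaTm OmegaTm) := .node hΩ hΩ
  ⟨isDivergenceClass_isOmegaTree.evalsToValue_plug_iff hΩ hΩΩ C,
    isDivergenceClass_isOmegaTree.evalsToStuck_plug_iff hΩ hΩΩ C⟩

/-- The diverging terms Ω and Ω Ω are contextually equivalent in
the relaxed semantics. -/
theorem Omega_ctxEquiv_OmegaOmega :
    CtxEquiv OmegaTm (Tm.app OmegaTm OmegaTm) := by
  intro C _
  exact Omega_ctxEquiv_OmegaOmega_general C

end LambdaS
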